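/- Let P ⊆ Φ_{B_n} be a signed poset, let A ⊆ {1,…,n}, and let P_A = P ∩ span_ℝ{e_i : i ∈ A} be the induced signed poset on the coordinates A (which is again a signed poset). If P_A has a connected ideal that intersects at least two other connected ideals of P_A nontrivially, then P has a connected ideal that intersects at least two other connected ideals of P nontrivially. -/

import Mathlib

open scoped Classical

noncomputable section

/-- Signed index set `±[n]`: `(true, i)` represents `+i`, `(false, i)` represents `-i`. -/
abbrev SIdx (n : ℕ) := Bool × Fin n

/-- Negation `a ↦ -a` on `±[n]`. -/
def negS {n : ℕ} (a : SIdx n) : SIdx n := (!a.1, a.2)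

/-- Standard basis vector `e_i` of `ℝ^n`. -/
def stdB (n : ℕ) (i : Fin n) : Fin n → ℝ := Pi.single i 1

/-- `rsgn true = 1`, `rsgn false = -1`. -/
def rsgn (s : Bool) : ℝ := if s then 1 else -1

/-- `v(a)` for `a ∈ ±[n]`: `v(+i) = e_i`, `v(-i) = -e_i`. -/
def vS {n : ℕ} (a : SIdx n) : Fin n → ℝ := rsgn a.1 • stdB n a.2

/-- `v` on `±[n] ∪ {0}` (with `none` playing the role of `0`). -/
def vO {n : ℕ} : Option (SIdx n) → (Fin n → ℝ)
  | none => 0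
  | some a => vS a

/-- Negation on `±[n] ∪ {0}`, fixing `0`. -/
def negO {n : ℕ} : Option (SIdx n) → Option (SIdx n)
  | none => none
  | some a => some (negS a)

/-- Standard inner product on `ℝ^n`. -/
def dotR {n : ℕ} (x y : Fin n → ℝ) : ℝ := ∑ i, x i * y i

/-- The type `B_n` root system `Φ_{B_n}`. -/
def BnRoots (n : ℕ) : Set (Fin n → ℝ) :=
  {α | (∃ i j : Fin n, i < j ∧ ∃ s t : Bool, α = rsgn s • stdB n i + rsgn t • stdB n j) ∨
    ∃ i : Fin n, ∃ s : Bool, α = rsgn s • stdB n i}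

/-- The positive roots `Φ⁺_{B_n}`. -/
def BnPos (n : ℕ) : Set (Fin n → ℝ) :=
  {α | (∃ i j : Fin n, i < j ∧ ∃ t : Bool, α = stdB n i + rsgn t • stdB n j) ∨
    ∃ i : Fin n, α = stdB n i}

/-- The type `C_n` root system `Φ_{C_n}`. -/
def CnRoots (n : ℕ) : Set (Fin n → ℝ) :=
  {α | (∃ i j : Fin n, i < j ∧ ∃ s t : Bool, α = rsgn s • stdB n i + rsgn t • stdB n j) ∨
    ∃ i : Fin n, ∃ s : Bool, α = (2 * rsgn s) • stdB n i}

/-- Nonnegative real linear combinations of elements of `S`. -/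
def nnSpan {n : ℕ} (S : Set (Fin n → ℝ)) : Set (Fin n → ℝ) :=
  {x | ∃ (r : ℕ) (c : Fin r → ℝ) (β : Fin r → (Fin n → ℝ)),
    (∀ m, 0 ≤ c m) ∧ (∀ m, β m ∈ S) ∧ x = ∑ m, c m • β m}

/-- A signed poset: a subset of `Φ_{B_n}`, antisymmetric and closed under positive
linear combinations remaining in `Φ_{B_n}`. -/
def IsSignedPoset (n : ℕ) (P : Set (Fin n → ℝ)) : Prop :=
  P ⊆ BnRoots n ∧ (∀ α ∈ P, -α ∉ P) ∧ ∀ α ∈ BnRoots n, α ∈ nnSpan P → α ∈ P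

/-- A `C_n`-signed poset. -/
def IsCnSignedPoset (n : ℕ) (Q : Set (Fin n → ℝ)) : Prop :=
  Q ⊆ CnRoots n ∧ (∀ α ∈ Q, -α ∉ Q) ∧ ∀ α ∈ CnRoots n, α ∈ nnSpan Q → α ∈ Q

/-- The root cone `K^rt_P`. -/
def rootCone {n : ℕ} (P : Set (Fin n → ℝ)) : Set (Fin n → ℝ) := nnSpan P

/-- The weight cone `K^wt_P`. -/
def weightCone {n : ℕ} (P : Set (Fin n → ℝ)) : Set (Fin n → ℝ) :=
  {f | ∀ α ∈ P, 0 ≤ dotR f α}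

/-- The Fischer (strict) order on `±[n] ∪ {0}`:
`a < b` iff `v(a) - v(b) ∈ P`, or (`b = -a ≠ 0` and `v(a) ∈ P`). -/
def fLT {n : ℕ} (P : Set (Fin n → ℝ)) (a b : Option (SIdx n)) : Prop :=
  vO a - vO b ∈ P ∨ (a ≠ none ∧ b = negO a ∧ vO a ∈ P)

/-- A subset of `±[n]` is isotropic if it contains no pair `{i, -i}`. -/
def Isotropic {n : ℕ} (J : Finset (SIdx n)) : Prop :=
  ∀ i : Fin n, ¬((true, i) ∈ J ∧ (false, i) ∈ J)

/-- Signed characteristic vector of a subset of `±[n]`. -/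
def chiF {n : ℕ} (J : Finset (SIdx n)) : Fin n → ℝ := fun i =>
  if (true, i) ∈ J then 1 else if (false, i) ∈ J then -1 else 0

/-- `J` is an ideal of the signed poset `P`. -/
def IsIdeal {n : ℕ} (P : Set (Fin n → ℝ)) (J : Finset (SIdx n)) : Prop :=
  Isotropic J ∧ ∀ α ∈ P, 0 ≤ dotR (chiF J) α

/-- Comparability in the Fischer order of `P`. -/
def fComp {n : ℕ} (P : Set (Fin n → ℝ)) (a b : SIdx n) : Prop :=
  fLT P (some a) (some b) ∨ fLT P (some b) (some a)

/-- One step in the comparability graph on a subset `J` of `±[n]`. -/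
def connStep {n : ℕ} (P : Set (Fin n → ℝ)) (J : Finset (SIdx n)) (a b : SIdx n) : Prop :=
  a ∈ J ∧ b ∈ J ∧ fComp P a b

/-- `J` is connected: nonempty, and any two of its elements are joined by a path inside `J`
in the comparability graph of the Fischer order of `P`. -/
def IsConnectedIdl {n : ℕ} (P : Set (Fin n → ℝ)) (J : Finset (SIdx n)) : Prop :=
  J.Nonempty ∧ ∀ a ∈ J, ∀ b ∈ J, Relation.ReflTransGen (connStep P J) a b

/-- A connected ideal of `P`. -/
def IsConnIdeal {n : ℕ} (P : Set (Fin n → ℝ)) (J : Finset (SIdx n)) : Prop :=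
  IsIdeal P J ∧ IsConnectedIdl P J

/-- Support `supp J = {|a| : a ∈ J}`. -/
def suppF {n : ℕ} (J : Finset (SIdx n)) : Finset (Fin n) := J.image Prod.snd

/-- `J` and `K` intersect nontrivially. -/
def NontrivInter {n : ℕ} (J K : Finset (SIdx n)) : Prop :=
  (suppF J ∩ suppF K).Nonempty ∧ ¬J ⊆ K ∧ ¬K ⊆ J

/-- `J` and `K` intersect trivially. -/
def TrivInter {n : ℕ} (J K : Finset (SIdx n)) : Prop := ¬NontrivInter J K

/-- A signed permutation, as an anti-symmetric bijection of `±[n]`. -/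
def IsSPerm {n : ℕ} (w : SIdx n ≃ SIdx n) : Prop := ∀ a, w (negS a) = negS (w a)

/-- Linear action of a signed permutation on `ℝ^n`, determined by `w(e_i) = v(w(+i))`. -/
def spAct {n : ℕ} (w : SIdx n ≃ SIdx n) (x : Fin n → ℝ) : Fin n → ℝ :=
  ∑ i, x i • vS (w (true, i))

/-- `w` is a linear extension of `P`: a signed permutation with `P ⊆ w(Φ⁺_{B_n})`. -/
def IsLinExt {n : ℕ} (P : Set (Fin n → ℝ)) (w : SIdx n ≃ SIdx n) : Prop :=
  IsSPerm w ∧ ∀ α ∈ P, ∃ β ∈ BnPos n, α = spAct w β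

/-- The (finite) set `𝓛(P)` of linear extensions of `P`. -/
def linExts (n : ℕ) (P : Set (Fin n → ℝ)) : Finset (SIdx n ≃ SIdx n) :=
  Finset.univ.filter (IsLinExt P)

/-- Simple roots of `Φ_{B_n}`: `α_i = e_i - e_{i+1}` for `i < n - 1`, `α_{n-1} = e_{n-1}`
(0-indexed). -/
def simpleRoot (n : ℕ) (i : Fin n) : Fin n → ℝ := fun j =>
  (if j = i then (1 : ℝ) else 0) - if (j : ℕ) = (i : ℕ) + 1 then 1 else 0

/-- `J^w_m = {w(1), …, w(m)}` (0-indexed: the images under `w` of `+1, …, +(m+1)`). -/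
def JwSet {n : ℕ} (w : SIdx n ≃ SIdx n) (m : Fin n) : Finset (SIdx n) :=
  (Finset.univ.filter (fun j : Fin n => j ≤ m)).image (fun j => w (true, j))

/-- An extensible ideal of `P`. -/
def Extensible (n : ℕ) (P : Set (Fin n → ℝ)) (J : Finset (SIdx n)) : Prop :=
  ∃ I : Finset (SIdx n), I.Nonempty ∧ Disjoint I J ∧
    IsIdeal P (J ∪ I) ∧ IsIdeal P (J ∪ I.image negS)

/-- The finite set `J_conn(P)` of connected ideals of `P`. -/
def JconnF (n : ℕ) (P : Set (Fin n → ℝ)) : Finset (Finset (SIdx n)) :=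
  Finset.univ.filter (IsConnIdeal P)

/-- Membership in `Π(P)`: an unordered pair of nontrivially intersecting connected ideals. -/
def inPiP {n : ℕ} (P : Set (Fin n → ℝ)) (p : Sym2 (Finset (SIdx n))) : Prop :=
  ∃ J K : Finset (SIdx n),
    p = s(J, K) ∧ IsConnIdeal P J ∧ IsConnIdeal P K ∧ NontrivInter J K

/-- The finite set `Π(P)` of unordered pairs of nontrivially intersecting connected ideals. -/
def PiP (n : ℕ) (P : Set (Fin n → ℝ)) : Finset (Sym2 (Finset (SIdx n))) :=
  Finset.univ.filter (inPiP P)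

/-- No connected ideal of `P` intersects two or more other connected ideals nontrivially. -/
def NoDoubleNontriv (n : ℕ) (P : Set (Fin n → ℝ)) : Prop :=
  ∀ J K K' : Finset (SIdx n), IsConnIdeal P J → IsConnIdeal P K → IsConnIdeal P K' →
    NontrivInter J K → NontrivInter J K' → K = K'

/-- The connected component of `a` inside `J` (w.r.t. the Fischer comparability graph). -/
def componentIn {n : ℕ} (P : Set (Fin n → ℝ)) (J : Finset (SIdx n)) (a : SIdx n) :
    Finset (SIdx n) :=
  J.filter (fun b => Relation.ReflTransGen (connStep P J) a b)

/-- The set of connected components of `J`. -/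
def componentsOf {n : ℕ} (P : Set (Fin n → ℝ)) (J : Finset (SIdx n)) :
    Finset (Finset (SIdx n)) :=
  J.image (componentIn P J)

/-- The signed support `supp±(f) = {sgn(f_i)·i : f_i ≠ 0}` of a vector `f ∈ ℝ^n`. -/
def suppPM {n : ℕ} (f : Fin n → ℝ) : Finset (SIdx n) :=
  Finset.univ.filter (fun a : SIdx n => if a.1 then 0 < f a.2 else f a.2 < 0)

/-- Index type for the variables `U_J`, `J` a connected ideal of `P`. -/
abbrev ConnIdx (n : ℕ) (P : Set (Fin n → ℝ)) := {J : Finset (SIdx n) // IsConnIdeal P J}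

/-- Integer signed characteristic vector, as an exponent vector for Laurent monomials. -/
def chiZ {n : ℕ} (J : Finset (SIdx n)) : Fin n →₀ ℤ :=
  Finsupp.equivFunOnFinite.symm (fun i =>
    if (true, i) ∈ J then 1 else if (false, i) ∈ J then -1 else 0)

/-- The map `φ : k[U_J : J ∈ J_conn(P)] → k[x_1^{±1}, …, x_n^{±1}]`, `U_J ↦ x^{χ_J}`. -/
def phiWt (n : ℕ) (P : Set (Fin n → ℝ)) (k : Type) [Field k] :
    MvPolynomial (ConnIdx n P) k →ₐ[k] AddMonoidAlgebra k (Fin n →₀ ℤ) :=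
  MvPolynomial.aeval (fun J => AddMonoidAlgebra.single (chiZ J.val) 1)

/-- The binomial `syz(U_J, U_K) = U_J U_K - (∏_A U_A) (∏_B U_B)`, where `A` runs over the
connected components of `J ∩ K` and `B` over the connected components of `supp±(χ_J + χ_K)`. -/
def syzPoly (n : ℕ) (P : Set (Fin n → ℝ)) (k : Type) [Field k] (J K : ConnIdx n P) :
    MvPolynomial (ConnIdx n P) k :=
  MvPolynomial.X J * MvPolynomial.X K -
    (∏ A ∈ Finset.univ.filter
        (fun A : ConnIdx n P => (A : Finset (SIdx n)) ∈ componentsOf P (J.val ∩ K.val)),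
        MvPolynomial.X A) *
      ∏ B ∈ Finset.univ.filter
        (fun B : ConnIdx n P =>
          (B : Finset (SIdx n)) ∈ componentsOf P (suppPM (chiF J.val + chiF K.val))),
        MvPolynomial.X B

/-- `θ_1, …, θ_r` is a regular sequence: the ideal it generates is proper, and each `θ_{m+1}`
is a non-zero-divisor modulo the ideal generated by `θ_1, …, θ_m`. -/
def IsRegSeq {R : Type} [CommRing R] {r : ℕ} (θ : Fin r → R) : Prop :=
  Ideal.span (Set.range θ) ≠ ⊤ ∧
    ∀ (m : ℕ) (hm : m < r) (x : R),
      θ ⟨m, hm⟩ * x ∈ Ideal.span (θ '' {j : Fin r | (j : ℕ) < m}) →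
        x ∈ Ideal.span (θ '' {j : Fin r | (j : ℕ) < m})

/-- The induced signed poset `P_A = P ∩ span_ℝ{e_i : i ∈ A}`. -/
def inducedPoset (n : ℕ) (P : Set (Fin n → ℝ)) (A : Finset (Fin n)) : Set (Fin n → ℝ) :=
  {α | α ∈ P ∧ α ∈ Submodule.span ℝ (stdB n '' (A : Set (Fin n)))}

/-- The major index of a signed permutation. -/
def majB {n : ℕ} (w : SIdx n ≃ SIdx n) : ℕ :=
  ∑ i ∈ Finset.univ.filter
      (fun i : Fin n => spAct w (simpleRoot n i) ∉ BnPos n), ((i : ℕ) + 1)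

/-- `[m]_q = 1 + q + ⋯ + q^{m-1}` in `ℤ[q]`. -/
def qInt (m : ℕ) : Polynomial ℤ := ∑ t ∈ Finset.range m, Polynomial.X ^ t

/-- The symmetric function `{J, K} ↦ ⟨x, χ_J + χ_K⟩` on unordered pairs. -/
def pairDot {n : ℕ} (x : Fin n → ℝ) : Sym2 (Finset (SIdx n)) → ℝ :=
  Sym2.lift ⟨fun J K => dotR x (chiF J + chiF K),
    fun J K => congrArg (dotR x) (add_comm (chiF J) (chiF K))⟩

/-- The symmetric function `{J, K} ↦ [|J| + |K|]_q` on unordered pairs. -/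
def pairQ {n : ℕ} : Sym2 (Finset (SIdx n)) → Polynomial ℤ :=
  Sym2.lift ⟨fun J K => qInt (J.card + K.card),
    fun J K => congrArg qInt (Nat.add_comm J.card K.card)⟩

/-- The principal order ideal `I_≤(a)` in the Fischer order restricted to `±[n]`. -/
def Ile {n : ℕ} (P : Set (Fin n → ℝ)) (a : SIdx n) : Set (SIdx n) :=
  {b | b = a ∨ fLT P (some b) (some a)}

/-- A set of signed indices is isotropic if it contains no pair `{i, -i}`. -/
def IsoSet {n : ℕ} (S : Set (SIdx n)) : Prop :=
  ∀ i : Fin n, ¬((true, i) ∈ S ∧ (false, i) ∈ S)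

/-- A covering pair of the Fischer order of `P`. -/
def CovPair {n : ℕ} (P : Set (Fin n → ℝ)) (a b : Option (SIdx n)) : Prop :=
  fLT P a b ∧ ¬∃ c : Option (SIdx n), fLT P a c ∧ fLT P c b

/-- The set of covering roots of `P`. -/
def covRoots {n : ℕ} (P : Set (Fin n → ℝ)) : Set (Fin n → ℝ) :=
  {x | ∃ a b : Option (SIdx n), CovPair P a b ∧ x = vO a - vO b}

/-- The set `J_ε = {i : ε_i = 1} ∪ {-i : ε_i = -1}` attached to a `{-1,0,1}`-vector. -/
def Jeps {n : ℕ} (ε : Fin n → ℝ) : Set (SIdx n) :=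
  {a | (a.1 = true ∧ ε a.2 = 1) ∨ (a.1 = false ∧ ε a.2 = -1)}

/-- The preorder `a ≤ b` iff `v(a) - v(b)` lies in the cone of `P`. -/
def cle {n : ℕ} (P : Set (Fin n → ℝ)) (a b : SIdx n) : Prop := vS a - vS b ∈ nnSpan P

theorem vS_neg {n : ℕ} (a : SIdx n) : vS (negS a) = - vS a := by
  rcases a with ⟨s, i⟩
  cases s <;> simp [vS, negS, rsgn]

theorem negS_negS {n : ℕ} (a : SIdx n) : negS (negS a) = a := by
  rcases a with ⟨s, i⟩
  simp [negS]

theorem nnSpan_add {n : ℕ} {P : Set (Fin n → ℝ)} {x y : Fin n → ℝ}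
    (hx : x ∈ nnSpan P) (hy : y ∈ nnSpan P) : x + y ∈ nnSpan P := by
  obtain ⟨r, c, β, hc, hβ, rfl⟩ := hx
  obtain ⟨r', c', β', hc', hβ', rfl⟩ := hy
  refine ⟨r + r', Fin.append c c', Fin.append β β', ?_, ?_, ?_⟩
  · intro m
    refine Fin.addCases (fun i => ?_) (fun i => ?_) m
    · simpa using hc i
    · simpa using hc' i
  · intro m
    refine Fin.addCases (fun i => ?_) (fun i => ?_) m
    · simpa using hβ i
    · simpa using hβ' i
  · simp [Fin.sum_univ_add]

theorem nnSpan_smul {n : ℕ} {P : Set (Fin n → ℝ)} {x : Fin n → ℝ} {t : ℝ} (ht : 0 ≤ t)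
    (hx : x ∈ nnSpan P) : t • x ∈ nnSpan P := by
  obtain ⟨r, c, β, hc, hβ, rfl⟩ := hx
  refine ⟨r, fun m => t * c m, β, fun m => mul_nonneg ht (hc m), hβ, ?_⟩
  simp [Finset.smul_sum, smul_smul]

theorem nnSpan_zero {n : ℕ} (P : Set (Fin n → ℝ)) : (0 : Fin n → ℝ) ∈ nnSpan P :=
  ⟨0, Fin.elim0, Fin.elim0, fun m => m.elim0, fun m => m.elim0, by simp⟩

theorem nnSpan_self {n : ℕ} {P : Set (Fin n → ℝ)} {x : Fin n → ℝ} (hx : x ∈ P) :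
    x ∈ nnSpan P :=
  ⟨1, fun _ => 1, fun _ => x, fun _ => zero_le_one, fun _ => hx, by simp⟩

theorem nnSpan_mono {n : ℕ} {P Q : Set (Fin n → ℝ)} (h : P ⊆ Q) : nnSpan P ⊆ nnSpan Q := by
  rintro x ⟨r, c, β, hc, hβ, rfl⟩
  exact ⟨r, c, β, hc, fun m => h (hβ m), rfl⟩

theorem dotR_add {n : ℕ} (x y z : Fin n → ℝ) : dotR x (y + z) = dotR x y + dotR x z := by
  simp [dotR, mul_add, Finset.sum_add_distrib]

theorem dotR_smul {n : ℕ} (x y : Fin n → ℝ) (t : ℝ) : dotR x (t • y) = t * dotR x y := by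
  simp only [dotR, Finset.mul_sum, Pi.smul_apply, smul_eq_mul]
  exact Finset.sum_congr rfl fun i _ => by ring

theorem dotR_neg {n : ℕ} (x y : Fin n → ℝ) : dotR x (- y) = - dotR x y := by
  simp [dotR]

theorem dotR_nnSpan {n : ℕ} {P : Set (Fin n → ℝ)} {f x : Fin n → ℝ}
    (hf : ∀ α ∈ P, 0 ≤ dotR f α) (hx : x ∈ nnSpan P) : 0 ≤ dotR f x := by
  obtain ⟨r, c, β, hc, hβ, rfl⟩ := hx
  have : dotR f (∑ m, c m • β m) = ∑ m, c m * dotR f (β m) := by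
    simp only [dotR, Finset.sum_apply, Pi.smul_apply, smul_eq_mul, Finset.mul_sum]
    rw [Finset.sum_comm]
    exact Finset.sum_congr rfl fun i _ => Finset.sum_congr rfl fun j _ => by ring
  rw [this]
  exact Finset.sum_nonneg fun m _ => mul_nonneg (hc m) (hf _ (hβ m))

theorem dotR_vS {n : ℕ} (f : Fin n → ℝ) (a : SIdx n) : dotR f (vS a) = rsgn a.1 * f a.2 := by
  simp only [dotR, vS, stdB, Pi.smul_apply, smul_eq_mul, Pi.single_apply]
  simp [mul_comm]

theorem iso_iff {n : ℕ} {J : Finset (SIdx n)} :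
    Isotropic J ↔ ∀ a, a ∈ J → negS a ∉ J := by
  constructor
  · rintro h ⟨s, i⟩ h1 h2
    cases s
    · exact h i ⟨h2, h1⟩
    · exact h i ⟨h1, h2⟩
  · intro h i hi
    exact h _ hi.1 hi.2

theorem chi_mem {n : ℕ} {J : Finset (SIdx n)} (hJ : Isotropic J) {a : SIdx n} (ha : a ∈ J) :
    dotR (chiF J) (vS a) = 1 := by
  rcases a with ⟨s, i⟩
  rw [dotR_vS]
  cases s
  · have : (true, i) ∉ J := fun h => hJ i ⟨h, ha⟩
    simp [chiF, rsgn, this, ha]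
  · simp [chiF, rsgn, ha]

theorem chi_not {n : ℕ} {J : Finset (SIdx n)} {a : SIdx n} (ha : a ∉ J) :
    dotR (chiF J) (vS a) ≤ 0 := by
  rcases a with ⟨s, i⟩
  rw [dotR_vS]
  cases s <;> simp [chiF, rsgn, ha] <;> split_ifs <;> norm_num

theorem chi_nonneg {n : ℕ} {J : Finset (SIdx n)} {a : SIdx n} (ha : negS a ∉ J) :
    0 ≤ dotR (chiF J) (vS a) := by
  have := chi_not ha
  rw [vS_neg, dotR_neg] at this
  linarith

theorem cle_refl {n : ℕ} (P : Set (Fin n → ℝ)) (a : SIdx n) : cle P a a := by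
  simpa [cle] using nnSpan_zero P

theorem cle_trans {n : ℕ} {P : Set (Fin n → ℝ)} {a b c : SIdx n} (h : cle P a b)
    (h' : cle P b c) : cle P a c := by
  have := nnSpan_add h h'
  simpa [cle] using this

theorem cle_neg {n : ℕ} {P : Set (Fin n → ℝ)} {a b : SIdx n} (h : cle P a b) :
    cle P (negS b) (negS a) := by
  unfold cle at *
  rw [vS_neg, vS_neg]
  convert h using 1
  abel

theorem root_of_ne {n : ℕ} {a b : SIdx n} (h : a.2 ≠ b.2) : vS a - vS b ∈ BnRoots n := by
  rw [sub_eq_add_neg, ← vS_neg]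
  rcases lt_or_gt_of_ne h with h | h
  · exact Or.inl ⟨a.2, b.2, h, a.1, (negS b).1, rfl⟩
  · exact Or.inl ⟨b.2, a.2, h, (negS b).1, a.1, add_comm _ _⟩

theorem eq_or_neg {n : ℕ} {a b : SIdx n} (h : a.2 = b.2) : b = a ∨ b = negS a := by
  rcases a with ⟨s, i⟩
  rcases b with ⟨t, j⟩
  simp only at h
  subst h
  cases s <;> cases t <;> simp [negS]

theorem cle_fLT {n : ℕ} {P : Set (Fin n → ℝ)} (hP : IsSignedPoset n P) {a b : SIdx n}
    (h : cle P a b) (hab : a ≠ b) : fLT P (some a) (some b) := by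
  by_cases h2 : a.2 = b.2
  · rcases eq_or_neg h2 with rfl | rfl
    · exact absurd rfl hab
    · refine Or.inr ⟨by simp, rfl, ?_⟩
      refine hP.2.2 _ (Or.inr ⟨a.2, a.1, rfl⟩) ?_
      have := nnSpan_smul (t := 1 / 2) (by norm_num) h
      convert this using 1
      rw [vS_neg]
      funext i
      simp [vO]
      ring
  · exact Or.inl (hP.2.2 _ (root_of_ne h2) h)

theorem fLT_cle {n : ℕ} {P : Set (Fin n → ℝ)} {a b : SIdx n}
    (h : fLT P (some a) (some b)) : cle P a b := by
  rcases h with h | ⟨_, h, h'⟩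
  · exact nnSpan_self h
  · have hb : b = negS a := by simpa [negO] using h
    subst hb
    have := nnSpan_smul (t := 2) (by norm_num) (nnSpan_self h')
    unfold cle
    convert this using 1
    rw [vS_neg]
    funext i
    simp [vO]
    ring

theorem ideal_down {n : ℕ} {P : Set (Fin n → ℝ)} {J : Finset (SIdx n)} (hJ : IsIdeal P J)
    {a b : SIdx n} (h : cle P a b) (hb : b ∈ J) : a ∈ J := by
  by_contra ha
  have h1 := dotR_nnSpan hJ.2 h
  rw [sub_eq_add_neg, dotR_add, dotR_neg, chi_mem hJ.1 hb] at h1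
  have := chi_not ha
  linarith

theorem ideal_of_down {n : ℕ} {P : Set (Fin n → ℝ)} (hP : IsSignedPoset n P)
    {D : Finset (SIdx n)} (hD : Isotropic D) (hd : ∀ a b, cle P a b → b ∈ D → a ∈ D) :
    IsIdeal P D := by
  refine ⟨hD, fun α hα => ?_⟩
  rcases hP.1 hα with ⟨i, j, _, s, t, h⟩ | ⟨i, s, h⟩
  · have h' : α = vS (s, i) + vS (t, j) := h
    generalize (s, i) = a at h'
    generalize (t, j) = b at h'
    have l1 : cle P a (negS b) := by
      unfold cle
      rw [vS_neg, sub_neg_eq_add, ← h']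
      exact nnSpan_self hα
    have l2 : cle P b (negS a) := by
      have := cle_neg l1
      rwa [negS_negS] at this
    rw [h', dotR_add]
    by_cases hb : negS b ∈ D
    · have e1 := chi_mem hD (hd _ _ l1 hb)
      have e2 := chi_mem hD hb
      rw [vS_neg, dotR_neg] at e2
      linarith
    · by_cases ha : negS a ∈ D
      · have e1 := chi_mem hD (hd _ _ l2 ha)
        have e2 := chi_mem hD ha
        rw [vS_neg, dotR_neg] at e2
        linarith
      · exact add_nonneg (chi_nonneg ha) (chi_nonneg hb)
  · have h' : α = vS (s, i) := h
    generalize (s, i) = a at h'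
    rw [h']
    apply chi_nonneg
    intro ha
    have l : cle P a (negS a) := by
      unfold cle
      rw [vS_neg, sub_neg_eq_add, ← h']
      exact nnSpan_add (nnSpan_self hα) (nnSpan_self hα)
    exact iso_iff.1 hD _ (hd _ _ l ha) ha

theorem induced_signed {n : ℕ} {P : Set (Fin n → ℝ)} (hP : IsSignedPoset n P)
    (A : Finset (Fin n)) : IsSignedPoset n (inducedPoset n P A) := by
  refine ⟨fun α h => hP.1 h.1, fun α h h' => hP.2.1 _ h.1 h'.1, fun α hα h => ⟨?_, ?_⟩⟩
  · exact hP.2.2 _ hα (nnSpan_mono (fun x hx => hx.1) h)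
  · obtain ⟨r, c, β, hc, hβ, rfl⟩ := h
    exact Submodule.sum_mem _ fun m _ => Submodule.smul_mem _ _ (hβ m).2

theorem cle_induced {n : ℕ} {P : Set (Fin n → ℝ)} (hP : IsSignedPoset n P)
    {A : Finset (Fin n)} {a b : SIdx n} (h : cle P a b) (ha : a.2 ∈ A) (hb : b.2 ∈ A) :
    cle (inducedPoset n P A) a b := by
  by_cases hab : a = b
  · rw [hab]
    exact cle_refl _ _
  have key : ∀ c : SIdx n, c.2 ∈ A → vS c ∈ Submodule.span ℝ (stdB n '' (A : Set (Fin n))) :=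
    fun c hc => Submodule.smul_mem _ _ (Submodule.subset_span ⟨c.2, hc, rfl⟩)
  apply fLT_cle
  rcases cle_fLT hP h hab with h1 | ⟨h1, h2, h3⟩
  · exact Or.inl ⟨h1, Submodule.sub_mem _ (key a ha) (key b hb)⟩
  · exact Or.inr ⟨h1, h2, h3, key a ha⟩

/-- The down-closure of a set in the order of `P`. -/
def dcl {n : ℕ} (P : Set (Fin n → ℝ)) (J : Finset (SIdx n)) : Finset (SIdx n) :=
  Finset.univ.filter (fun a => ∃ b ∈ J, cle P a b)

theorem mem_dcl {n : ℕ} {P : Set (Fin n → ℝ)} {J : Finset (SIdx n)} {a : SIdx n} :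
    a ∈ dcl P J ↔ ∃ b ∈ J, cle P a b := by
  simp [dcl]

theorem sub_dcl {n : ℕ} {P : Set (Fin n → ℝ)} {J : Finset (SIdx n)} : J ⊆ dcl P J :=
  fun a ha => mem_dcl.2 ⟨a, ha, cle_refl _ _⟩

theorem dcl_inter {n : ℕ} {P : Set (Fin n → ℝ)} (hP : IsSignedPoset n P)
    {A : Finset (Fin n)} {J : Finset (SIdx n)} (hJA : ∀ a ∈ J, a.2 ∈ A)
    (hJ : IsIdeal (inducedPoset n P A) J) {a : SIdx n} (ha : a.2 ∈ A)
    (h : a ∈ dcl P J) : a ∈ J := by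
  obtain ⟨b, hb, hab⟩ := mem_dcl.1 h
  exact ideal_down hJ (cle_induced hP hab ha (hJA b hb)) hb

theorem fComp_symm {n : ℕ} {P : Set (Fin n → ℝ)} {a b : SIdx n} (h : fComp P a b) :
    fComp P b a := Or.symm h

theorem dcl_conn {n : ℕ} {P : Set (Fin n → ℝ)} (hP : IsSignedPoset n P)
    {A : Finset (Fin n)} {J : Finset (SIdx n)} (hJA : ∀ a ∈ J, a.2 ∈ A)
    (hJ : IsConnIdeal (inducedPoset n P A) J) : IsConnIdeal P (dcl P J) := by
  refine ⟨ideal_of_down hP ?_ ?_, ?_, ?_⟩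
  · rw [iso_iff]
    intro x hx hx'
    obtain ⟨a, ha, hxa⟩ := mem_dcl.1 hx
    obtain ⟨b, hb, hxb⟩ := mem_dcl.1 hx'
    have h1 := cle_neg hxb
    rw [negS_negS] at h1
    have h2 : negS b ∈ J := dcl_inter hP hJA hJ.1 (a := negS b) (hJA b hb)
      (mem_dcl.2 ⟨a, ha, cle_trans h1 hxa⟩)
    exact iso_iff.1 hJ.1.1 b hb h2
  · intro a b hab hb
    obtain ⟨c, hc, hbc⟩ := mem_dcl.1 hb
    exact mem_dcl.2 ⟨c, hc, cle_trans hab hbc⟩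
  · exact hJ.2.1.mono sub_dcl
  · have step : ∀ x ∈ dcl P J, ∃ a ∈ J, Relation.ReflTransGen (connStep P (dcl P J)) x a ∧
        Relation.ReflTransGen (connStep P (dcl P J)) a x := by
      intro x hx
      obtain ⟨a, ha, hxa⟩ := mem_dcl.1 hx
      refine ⟨a, ha, ?_⟩
      by_cases h : x = a
      · subst h
        exact ⟨.refl, .refl⟩
      · have hl := cle_fLT hP hxa h
        exact ⟨.single ⟨hx, sub_dcl ha, Or.inl hl⟩, .single ⟨sub_dcl ha, hx, Or.inr hl⟩⟩
    have lt : ∀ a b, fLT (inducedPoset n P A) a b → fLT P a b := by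
      rintro a b (h | ⟨h1, h2, h3⟩)
      · exact Or.inl h.1
      · exact Or.inr ⟨h1, h2, h3.1⟩
    intro x hx y hy
    obtain ⟨a, ha, hxa, -⟩ := step x hx
    obtain ⟨b, hb, -, hby⟩ := step y hy
    refine hxa.trans (Relation.ReflTransGen.trans ?_ hby)
    refine Relation.ReflTransGen.mono ?_ _ _ (hJ.2.2 a ha b hb)
    rintro u v ⟨hu, hv, h⟩
    exact ⟨sub_dcl hu, sub_dcl hv, h.imp (lt _ _) (lt _ _)⟩

theorem dcl_subset {n : ℕ} {P : Set (Fin n → ℝ)} (hP : IsSignedPoset n P)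
    {A : Finset (Fin n)} {J K : Finset (SIdx n)} (hJA : ∀ a ∈ J, a.2 ∈ A)
    (hKA : ∀ a ∈ K, a.2 ∈ A) (hK : IsIdeal (inducedPoset n P A) K)
    (h : dcl P J ⊆ dcl P K) : J ⊆ K :=
  fun a ha => dcl_inter hP hKA hK (hJA a ha) (h (sub_dcl ha))

theorem dcl_nontriv {n : ℕ} {P : Set (Fin n → ℝ)} (hP : IsSignedPoset n P)
    {A : Finset (Fin n)} {J K : Finset (SIdx n)} (hJA : ∀ a ∈ J, a.2 ∈ A)
    (hKA : ∀ a ∈ K, a.2 ∈ A) (hJ : IsIdeal (inducedPoset n P A) J)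
    (hK : IsIdeal (inducedPoset n P A) K) (h : NontrivInter J K) :
    NontrivInter (dcl P J) (dcl P K) :=
  ⟨h.1.mono (Finset.inter_subset_inter (Finset.image_subset_image sub_dcl)
      (Finset.image_subset_image sub_dcl)),
    fun h' => h.2.1 (dcl_subset hP hJA hKA hK h'),
    fun h' => h.2.2 (dcl_subset hP hKA hJA hJ h')⟩

theorem statement_17 (n : ℕ) (hn : 1 ≤ n) (P : Set (Fin n → ℝ)) (hP : IsSignedPoset n P)
    (A : Finset (Fin n)) :
    IsSignedPoset n (inducedPoset n P A) ∧
    ((∃ J K K' : Finset (SIdx n),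
        (∀ a ∈ J, a.2 ∈ A) ∧ (∀ a ∈ K, a.2 ∈ A) ∧ (∀ a ∈ K', a.2 ∈ A) ∧
        IsConnIdeal (inducedPoset n P A) J ∧ IsConnIdeal (inducedPoset n P A) K ∧
        IsConnIdeal (inducedPoset n P A) K' ∧ K ≠ K' ∧
        NontrivInter J K ∧ NontrivInter J K') →
      ∃ J K K' : Finset (SIdx n),
        IsConnIdeal P J ∧ IsConnIdeal P K ∧ IsConnIdeal P K' ∧ K ≠ K' ∧
        NontrivInter J K ∧ NontrivInter J K') := by
  refine ⟨induced_signed hP A, ?_⟩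
  rintro ⟨J, K, K', hJA, hKA, hKA', hJ, hK, hK', hne, h1, h2⟩
  refine ⟨dcl P J, dcl P K, dcl P K', dcl_conn hP hJA hJ, dcl_conn hP hKA hK,
    dcl_conn hP hKA' hK', fun he => hne ?_, dcl_nontriv hP hJA hKA hJ.1 hK.1 h1,
    dcl_nontriv hP hJA hKA' hJ.1 hK'.1 h2⟩
  exact Finset.Subset.antisymm (dcl_subset hP hKA hKA' hK'.1 he.subset)
    (dcl_subset hP hKA' hKA hK.1 he.symm.subset)
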